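/- Let γ ∈ (0,2), d := 2(γ+1)/(2−γ), and let n be a real number with n ≥ 2d (note 2d > 2). Let b̃ over (ℕ₀, m̃) be the one-dimensional graph associated with the γ-anti-tree, with intrinsic degree path metric ρ̃ and closed balls B̃_k(r). Then there exists C_S > 0 such that for every k ∈ ℕ₀, every r ≥ max(1, ρ̃(0,k)), and every finitely supported φ : ℕ₀ → ℝ with support contained in B̃_k(r): ( m̃(B̃_k(r))^{2/n} / (C_S r²) ) · ( Σ_{l∈ℕ₀} m̃(l) |φ(l)|^{2n/(n−2)} )^{(n−2)/n} ≤ Σ_{k',l∈ℕ₀} b̃(k',l) (φ(k') − φ(l))² + (1/r²) · Σ_{l∈ℕ₀} m̃(l) φ(l)². -/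

import Mathlib

/-!
In `ρ̃` the edge `(k, k + 1)` has length of order `(k + 1) ^ (-γ / 2)`, so a ball of radius
`r ≥ max 1 (ρ̃ 0 k)` lies in an initial segment `{0, …, M - 1}` with `M ^ (2 - γ) ≲ r ^ 2` and has
measure `≲ M ^ (γ + 1)`. A function `φ` vanishing from `M` on is the tail sum of its increments, so
the inequality becomes a discrete Hardy inequality
`(∑ (l + 1) ^ γ |φ l| ^ (2 p)) ^ (1 / p) ≲ M ^ θ ∑ (j + 1) ^ (2 γ) (φ (j + 1) - φ j) ^ 2` with
`p = n / (n - 2)` and `θ = 2 - γ - 2 (γ + 1) / n`. It follows from Cauchy–Schwarz against a power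
weight and Minkowski's inequality in `ℓ ^ p`. Multiplying by the `2 / n`-th power of the measure
turns `M ^ θ` into `M ^ (2 - γ) ≲ r ^ 2`.
-/

open scoped BigOperators

/-- Vertex set of the anti-tree with sphere function `s`:
the `k`-th sphere has `s k` elements. -/
def AntiTree (s : ℕ → ℕ) : Type := Σ k : ℕ, Fin (s k)

namespace AntiTree

/-- Standard edge weights of the anti-tree: consecutive spheres are completely connected,
and there are no other edges. -/
def wt (s : ℕ → ℕ) (x y : AntiTree s) : ℝ :=
  if x.1 + 1 = y.1 ∨ y.1 + 1 = x.1 then 1 else 0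

/-- Weighted vertex degree with respect to the counting measure `m ≡ 1`. -/
noncomputable def Deg (s : ℕ → ℕ) (x : AntiTree s) : ℝ := ∑' y : AntiTree s, wt s x y

end AntiTree

/-- Intrinsic degree path (pseudo-)metric of a weighted graph `b` whose weighted degree
function is `D`:  `ρ(x,y)` is the infimum over finite paths from `x` to `y` of
`∑_j min(1/D(x_j), 1/D(x_{j+1}))^{1/2}`. -/
noncomputable def pathMetric {X : Type*} (b : X → X → ℝ) (D : X → ℝ) (x y : X) : ℝ :=
  sInf { L : ℝ | ∃ (k : ℕ) (p : ℕ → X), p 0 = x ∧ p k = y ∧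
    (∀ j < k, 0 < b (p j) (p (j + 1))) ∧
    L = ∑ j ∈ Finset.range k, Real.sqrt (min (1 / D (p j)) (1 / D (p (j + 1)))) }

/-- The intrinsic degree path metric of the anti-tree. -/
noncomputable def AntiTree.rho (s : ℕ → ℕ) : AntiTree s → AntiTree s → ℝ :=
  pathMetric (AntiTree.wt s) (AntiTree.Deg s)

/-- Closed balls with respect to the intrinsic degree path metric. -/
noncomputable def AntiTree.ball (s : ℕ → ℕ) (x : AntiTree s) (r : ℝ) : Set (AntiTree s) :=
  {y | AntiTree.rho s x y ≤ r}

/-- The sphere function of the `γ`-anti-tree: `s (k-1) = ⌊k ^ γ⌋` for `k ≥ 1`,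
i.e. `s k = ⌊(k+1) ^ γ⌋`. -/
noncomputable def gammaSphere (γ : ℝ) : ℕ → ℕ := fun k => ⌊((k : ℝ) + 1) ^ γ⌋₊
namespace OneDim

/-- Measure of the one-dimensional graph associated with an anti-tree. -/
noncomputable def m (s : ℕ → ℕ) (k : ℕ) : ℝ := (s k : ℝ)

/-- Edge weights of the one-dimensional graph associated with an anti-tree. -/
noncomputable def wt (s : ℕ → ℕ) (k l : ℕ) : ℝ :=
  if k + 1 = l ∨ l + 1 = k then (s k : ℝ) * (s l : ℝ) else 0

/-- Weighted vertex degree of the one-dimensional graph. -/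
noncomputable def Deg (s : ℕ → ℕ) (k : ℕ) : ℝ := (1 / m s k) * ∑' l : ℕ, wt s k l

/-- Intrinsic degree path metric of the one-dimensional graph. -/
noncomputable def rho (s : ℕ → ℕ) : ℕ → ℕ → ℝ := pathMetric (wt s) (Deg s)

/-- Closed balls of the one-dimensional graph. -/
noncomputable def ball (s : ℕ → ℕ) (k : ℕ) (r : ℝ) : Set ℕ := {l | rho s k l ≤ r}

/-- Measure of a subset of the one-dimensional graph. -/
noncomputable def vol (s : ℕ → ℕ) (A : Set ℕ) : ℝ := ∑' l : ℕ, Set.indicator A (m s) l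

end OneDim

open Finset

/-! ### Sums of powers -/

lemma add_one_rpow_sub_rpow_le {x p : ℝ} (hx : 0 < x) (hp0 : 0 ≤ p) (hp1 : p ≤ 1) :
    (x + 1) ^ p - x ^ p ≤ x ^ (p - 1) := by
  have hinv : 0 < x⁻¹ := inv_pos.2 hx
  have hbern : (1 + x⁻¹) ^ p ≤ 1 + p * x⁻¹ :=
    rpow_one_add_le_one_add_mul_self (by linarith) hp0 hp1
  calc (x + 1) ^ p - x ^ p = x ^ p * ((1 + x⁻¹) ^ p - 1) := by
        rw [mul_sub_one, ← Real.mul_rpow hx.le (by positivity), mul_add, mul_inv_cancel₀ hx.ne',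
          mul_one]
    _ ≤ x ^ p * x⁻¹ := by
        gcongr
        nlinarith
    _ = x ^ (p - 1) := by rw [Real.rpow_sub_one hx.ne', div_eq_mul_inv]

lemma exists_rpow_sub_one_le_mul_sub {p : ℝ} (hp : p ≠ 0) :
    ∃ C : ℝ, 0 < C * p ∧ ∀ x : ℝ, 1 ≤ x → x ^ (p - 1) ≤ C * ((x + 1) ^ p - x ^ p) := by
  refine ⟨2 ^ |p - 1| / p, ?_, fun x hx => ?_⟩
  · rw [div_mul_cancel₀ _ hp]
    positivity
  have hx0 : 0 < x := by linarith
  obtain ⟨ξ, ⟨hxξ, hξx⟩, hξ⟩ := exists_hasDerivAt_eq_slope (fun y : ℝ => y ^ p)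
    (fun y => p * y ^ (p - 1)) (lt_add_one x)
    (fun y hy => (Real.continuousAt_rpow_const _ _
      (Or.inl (hx0.trans_le hy.1).ne')).continuousWithinAt)
    (fun y hy => Real.hasDerivAt_rpow_const (Or.inl (hx0.trans hy.1).ne'))
  have hξ0 : 0 < ξ := by linarith
  simp only [add_sub_cancel_left, div_one] at hξ
  rw [← hξ, ← mul_assoc, div_mul_cancel₀ _ hp]
  rcases le_total 0 (p - 1) with h | h
  · rw [abs_of_nonneg h, ← Real.mul_rpow zero_le_two hξ0.le]
    exact Real.rpow_le_rpow hx0.le (by linarith) h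
  · rw [abs_of_nonpos h, Real.rpow_neg zero_le_two, ← Real.inv_rpow zero_le_two,
      ← Real.mul_rpow (by positivity) hξ0.le]
    exact Real.rpow_le_rpow_of_nonpos (by positivity) (by linarith) h

/-- The sign condition `0 < C * p` lets one statement cover both the divergent sums (`p > 0`) and
the convergent ones (`p < 0`). -/
lemma exists_sum_Ico_rpow_sub_one_le {p : ℝ} (hp : p ≠ 0) :
    ∃ C : ℝ, 0 < C * p ∧ ∀ a b : ℕ, a ≤ b →
      ∑ j ∈ Ico a b, ((j : ℝ) + 1) ^ (p - 1) ≤ C * (((b : ℝ) + 1) ^ p - ((a : ℝ) + 1) ^ p) := by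
  obtain ⟨C, hCp, hC⟩ := exists_rpow_sub_one_le_mul_sub hp
  refine ⟨C, hCp, fun a b hab => ?_⟩
  rw [← sum_Ico_sub (fun j : ℕ => ((j : ℝ) + 1) ^ p) hab, mul_sum]
  refine sum_le_sum fun j _ => ?_
  rw [Nat.cast_succ]
  exact hC _ (le_add_of_nonneg_left j.cast_nonneg)

lemma exists_sum_range_rpow_sub_one_le {p : ℝ} (hp : 0 < p) :
    ∃ K : ℝ, 0 < K ∧ ∀ M : ℕ, ∑ j ∈ range (M + 1), ((j : ℝ) + 1) ^ (p - 1) ≤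
      K * ((M : ℝ) + 1) ^ p := by
  obtain ⟨C, hCp, hC⟩ := exists_sum_Ico_rpow_sub_one_le hp.ne'
  have hC0 : 0 < C := pos_of_mul_pos_left hCp hp.le
  refine ⟨C * 2 ^ p, by positivity, fun M => ?_⟩
  calc ∑ j ∈ range (M + 1), ((j : ℝ) + 1) ^ (p - 1)
      ≤ C * (((M + 1 : ℕ) + 1 : ℝ) ^ p - ((0 : ℕ) + 1 : ℝ) ^ p) := by
        rw [range_eq_Ico]
        exact hC 0 (M + 1) (Nat.zero_le _)
    _ ≤ C * (2 * ((M : ℝ) + 1)) ^ p := by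
        gcongr
        refine (sub_le_self _ (by positivity)).trans ?_
        gcongr
        push_cast
        linarith [(Nat.cast_nonneg M : (0 : ℝ) ≤ M)]
    _ = C * 2 ^ p * ((M : ℝ) + 1) ^ p := by
        rw [Real.mul_rpow zero_le_two (by positivity), mul_assoc]

lemma exists_sum_Ico_rpow_neg_sub_one_le {δ : ℝ} (hδ : 0 < δ) :
    ∃ K : ℝ, 0 < K ∧ ∀ a b : ℕ, a ≤ b →
      ∑ j ∈ Ico a b, ((j : ℝ) + 1) ^ (-δ - 1) ≤ K * ((a : ℝ) + 1) ^ (-δ) := by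
  obtain ⟨C, hCp, hC⟩ := exists_sum_Ico_rpow_sub_one_le (neg_ne_zero.2 hδ.ne')
  have hC0 : 0 < -C := pos_of_mul_pos_left (by linarith : 0 < -C * δ) hδ.le
  refine ⟨-C, hC0, fun a b hab => (hC a b hab).trans ?_⟩
  have := mul_nonneg hC0.le (by positivity : 0 ≤ ((b : ℝ) + 1) ^ (-δ))
  linarith

/-! ### Weighted discrete Hardy inequalities -/

lemma weighted_Lp_add_le_of_nonneg {ι : Type*} (t : Finset ι) {p : ℝ} (hp : 1 ≤ p)
    {ν f g : ι → ℝ} (hν : ∀ i, 0 ≤ ν i) (hf : ∀ i ∈ t, 0 ≤ f i) (hg : ∀ i ∈ t, 0 ≤ g i) :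
    (∑ i ∈ t, ν i * (f i + g i) ^ p) ^ (1 / p) ≤
      (∑ i ∈ t, ν i * f i ^ p) ^ (1 / p) + (∑ i ∈ t, ν i * g i ^ p) ^ (1 / p) := by
  have hp0 : p ≠ 0 := by positivity
  have absorb {x : ℝ} (i : ι) (hx : 0 ≤ x) : ν i * x ^ p = (ν i ^ p⁻¹ * x) ^ p := by
    rw [Real.mul_rpow (Real.rpow_nonneg (hν i) _) hx, Real.rpow_inv_rpow (hν i) hp0]
  rw [sum_congr rfl fun i hi => absorb i (add_nonneg (hf i hi) (hg i hi)),
    sum_congr rfl fun i hi => absorb i (hf i hi), sum_congr rfl fun i hi => absorb i (hg i hi)]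
  simp only [mul_add]
  exact Real.Lp_add_le_of_nonneg t hp
    (fun i hi => mul_nonneg (Real.rpow_nonneg (hν i) _) (hf i hi))
    (fun i hi => mul_nonneg (Real.rpow_nonneg (hν i) _) (hg i hi))

lemma weighted_Lp_tail_sum_le {p : ℝ} (hp : 1 ≤ p) {ν e : ℕ → ℝ} (hν : ∀ l, 0 ≤ ν l)
    (he : ∀ j, 0 ≤ e j) (M : ℕ) :
    (∑ l ∈ range M, ν l * (∑ j ∈ Ico l M, e j) ^ p) ^ (1 / p) ≤
      ∑ j ∈ range M, e j * (∑ l ∈ range (j + 1), ν l) ^ (1 / p) := by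
  have hp0 : p ≠ 0 := by positivity
  induction M with
  | zero => simp [hp0]
  | succ M ih =>
    have hsplit : ∀ l ∈ range (M + 1), ν l * (∑ j ∈ Ico l (M + 1), e j) ^ p =
        ν l * (∑ j ∈ Ico l M, e j + e M) ^ p := fun l hl => by
      rw [sum_Ico_succ_top (mem_range_succ_iff.1 hl)]
    have hconst : (∑ l ∈ range (M + 1), ν l * e M ^ p) ^ (1 / p) =
        e M * (∑ l ∈ range (M + 1), ν l) ^ (1 / p) := by
      rw [← sum_mul, Real.mul_rpow (sum_nonneg fun l _ => hν l) (Real.rpow_nonneg (he M) p),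
        one_div, Real.rpow_rpow_inv (he M) hp0, mul_comm]
    rw [sum_congr rfl hsplit, sum_range_succ (fun j => e j * _) M, ← hconst]
    refine (weighted_Lp_add_le_of_nonneg _ hp hν (fun l _ => sum_nonneg fun j _ => he j)
      fun _ _ => he M).trans (add_le_add_left ?_ _)
    rwa [sum_range_succ, Ico_self, sum_empty, Real.zero_rpow hp0, mul_zero, add_zero]

lemma sq_le_sum_inv_mul_sum_mul_sq {b φ : ℕ → ℝ} {l M : ℕ} (hb : ∀ j, 0 < b j) (hlM : l ≤ M)
    (hφ : φ M = 0) :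
    φ l ^ 2 ≤ (∑ j ∈ Ico l M, (b j)⁻¹) * ∑ j ∈ Ico l M, b j * (φ (j + 1) - φ j) ^ 2 := by
  have htel : φ l ^ 2 = (∑ j ∈ Ico l M, (φ (j + 1) - φ j)) ^ 2 := by
    rw [sum_Ico_sub _ hlM, hφ, zero_sub, neg_sq]
  rw [htel]
  exact sum_sq_le_sum_mul_sum_of_sq_le_mul _ (fun j _ => (inv_pos.2 (hb j)).le)
    (fun j _ => mul_nonneg (hb j).le (sq_nonneg _))
    (fun j _ => (inv_mul_cancel_left₀ (hb j).ne' _).ge)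

/-- Muckenhoupt-type criterion for the discrete Hardy inequality: `w` is an auxiliary weight, chosen
so that the tail sums of `1 / (w b)` are under control. -/
lemma hardy_of_weight {p A : ℝ} (hp : 1 ≤ p) {μ b w u φ : ℕ → ℝ} {M : ℕ} (hμ : ∀ l, 0 ≤ μ l)
    (hb : ∀ j, 0 < b j) (hw : ∀ j, 0 < w j)
    (hu : ∀ l < M, ∑ j ∈ Ico l M, (w j * b j)⁻¹ ≤ u l) (hu0 : ∀ l, 0 ≤ u l)
    (hA : ∀ j < M, w j * (∑ l ∈ range (j + 1), μ l * u l ^ p) ^ (1 / p) ≤ A) (hφ : φ M = 0) :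
    (∑ l ∈ range M, μ l * (φ l ^ 2) ^ p) ^ (1 / p) ≤
      A * ∑ j ∈ range M, b j * (φ (j + 1) - φ j) ^ 2 := by
  have hwb (j : ℕ) : 0 < w j * b j := mul_pos (hw j) (hb j)
  set e : ℕ → ℝ := fun j => w j * b j * (φ (j + 1) - φ j) ^ 2
  have he (j : ℕ) : 0 ≤ e j := mul_nonneg (hwb j).le (sq_nonneg _)
  have hpoint : ∀ l ∈ range M,
      μ l * (φ l ^ 2) ^ p ≤ μ l * u l ^ p * (∑ j ∈ Ico l M, e j) ^ p := fun l hl => by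
    have hlM := mem_range.1 hl
    have he_sum : 0 ≤ ∑ j ∈ Ico l M, e j := sum_nonneg fun j _ => he j
    rw [mul_assoc, ← Real.mul_rpow (hu0 l) he_sum]
    have hsq : φ l ^ 2 ≤ u l * ∑ j ∈ Ico l M, e j :=
      (sq_le_sum_inv_mul_sum_mul_sq hwb hlM.le hφ).trans
        (mul_le_mul_of_nonneg_right (hu l hlM) he_sum)
    exact mul_le_mul_of_nonneg_left (Real.rpow_le_rpow (sq_nonneg _) hsq (by positivity)) (hμ l)
  calc (∑ l ∈ range M, μ l * (φ l ^ 2) ^ p) ^ (1 / p)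
      ≤ (∑ l ∈ range M, μ l * u l ^ p * (∑ j ∈ Ico l M, e j) ^ p) ^ (1 / p) :=
        Real.rpow_le_rpow (sum_nonneg fun l _ => mul_nonneg (hμ l) (by positivity))
          (sum_le_sum hpoint) (by positivity)
    _ ≤ ∑ j ∈ range M, e j * (∑ l ∈ range (j + 1), μ l * u l ^ p) ^ (1 / p) :=
        weighted_Lp_tail_sum_le hp (fun l => mul_nonneg (hμ l) (Real.rpow_nonneg (hu0 l) p)) he M
    _ = ∑ j ∈ range M, w j * (∑ l ∈ range (j + 1), μ l * u l ^ p) ^ (1 / p) *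
          (b j * (φ (j + 1) - φ j) ^ 2) := sum_congr rfl fun j _ => by ring
    _ ≤ A * ∑ j ∈ range M, b j * (φ (j + 1) - φ j) ^ 2 := by
        rw [mul_sum]
        exact sum_le_sum fun j hj => mul_le_mul_of_nonneg_right (hA j (mem_range.1 hj))
          (mul_nonneg (hb j).le (sq_nonneg _))

lemma exists_weighted_Lp_rpow_le {γ δ p a : ℝ} (hp : 0 < p) (ha : 0 < a) (hδ : δ < (γ + 1) / p) :
    ∃ K : ℝ, 0 < K ∧ ∀ j : ℕ,
      (∑ l ∈ range (j + 1), ((l : ℝ) + 1) ^ γ * (a * ((l : ℝ) + 1) ^ (-δ)) ^ p) ^ (1 / p) ≤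
        K * ((j : ℝ) + 1) ^ ((γ + 1) / p - δ) := by
  have hexp : 0 < γ + 1 - δ * p := sub_pos.2 ((lt_div_iff₀ hp).1 hδ)
  obtain ⟨K, hK, hsum⟩ := exists_sum_range_rpow_sub_one_le hexp
  refine ⟨a * K ^ (1 / p), by positivity, fun j => ?_⟩
  have hterm (l : ℕ) : ((l : ℝ) + 1) ^ γ * (a * ((l : ℝ) + 1) ^ (-δ)) ^ p =
      a ^ p * ((l : ℝ) + 1) ^ (γ + 1 - δ * p - 1) := by
    have hl0 : (0 : ℝ) < (l : ℝ) + 1 := by positivity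
    rw [Real.mul_rpow ha.le (by positivity), ← Real.rpow_mul hl0.le, mul_left_comm,
      ← Real.rpow_add hl0]
    ring_nf
  simp only [hterm, ← mul_sum]
  calc (a ^ p * ∑ l ∈ range (j + 1), ((l : ℝ) + 1) ^ (γ + 1 - δ * p - 1)) ^ (1 / p)
      ≤ (a ^ p * (K * ((j : ℝ) + 1) ^ (γ + 1 - δ * p))) ^ (1 / p) := by
        gcongr
        exact hsum j
    _ = a * K ^ (1 / p) * ((j : ℝ) + 1) ^ ((γ + 1 - δ * p) * (1 / p)) := by
        rw [Real.mul_rpow (by positivity) (by positivity), Real.mul_rpow hK.le (by positivity),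
          ← Real.rpow_mul (by positivity : (0 : ℝ) ≤ j + 1), one_div,
          Real.rpow_rpow_inv ha.le hp.ne', mul_assoc]
    _ = a * K ^ (1 / p) * ((j : ℝ) + 1) ^ ((γ + 1) / p - δ) := by
        rw [mul_one_div, sub_div, mul_div_cancel_right₀ _ hp.ne']

/-- For `w j = (j + 1) ^ (δ + 1 - α)` the tail sums of `1 / (w b)` decay like `(l + 1) ^ (-δ)`, and
any `0 < δ < (γ + 1) / p` keeps the remaining sum divergent; we take the midpoint. -/
lemma exists_hardy_rpow {γ α p : ℝ} (hγ : -1 < γ) (hp : 1 ≤ p) (hα : α ≤ (γ + 1) / p + 1) :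
    ∃ K : ℝ, 0 < K ∧ ∀ (M : ℕ) (φ : ℕ → ℝ), φ M = 0 →
      (∑ l ∈ range M, ((l : ℝ) + 1) ^ γ * (φ l ^ 2) ^ p) ^ (1 / p) ≤
        K * (M : ℝ) ^ ((γ + 1) / p + 1 - α) *
          ∑ j ∈ range M, ((j : ℝ) + 1) ^ α * (φ (j + 1) - φ j) ^ 2 := by
  have hp0 : 0 < p := by positivity
  have hγp : 0 < (γ + 1) / p := div_pos (by linarith) hp0
  set δ : ℝ := (γ + 1) / p / 2
  obtain ⟨K₁, hK₁, htail⟩ := exists_sum_Ico_rpow_neg_sub_one_le (δ := δ) (half_pos hγp)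
  obtain ⟨K₂, hK₂, hhead⟩ := exists_weighted_Lp_rpow_le (δ := δ) hp0 hK₁ (half_lt_self hγp)
  refine ⟨K₂, hK₂, fun M φ hφ => ?_⟩
  refine hardy_of_weight (w := fun j => ((j : ℝ) + 1) ^ (δ + 1 - α))
    (u := fun l => K₁ * ((l : ℝ) + 1) ^ (-δ)) hp (fun l => by positivity) (fun j => by positivity)
    (fun j => by positivity) (fun l hl => ?_) (fun l => by positivity) (fun j hj => ?_) hφ
  · refine (sum_congr rfl fun j _ => ?_).trans_le (htail l M hl.le)
    rw [← Real.rpow_add (by positivity), ← Real.rpow_neg (by positivity)]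
    ring_nf
  have hjM : (j : ℝ) + 1 ≤ M := by exact_mod_cast hj
  calc ((j : ℝ) + 1) ^ (δ + 1 - α) *
        (∑ l ∈ range (j + 1), ((l : ℝ) + 1) ^ γ * (K₁ * ((l : ℝ) + 1) ^ (-δ)) ^ p) ^ (1 / p)
      ≤ ((j : ℝ) + 1) ^ (δ + 1 - α) * (K₂ * ((j : ℝ) + 1) ^ ((γ + 1) / p - δ)) := by
        gcongr
        exact hhead j
    _ = K₂ * ((j : ℝ) + 1) ^ ((γ + 1) / p + 1 - α) := by
        rw [mul_left_comm, ← Real.rpow_add (by positivity)]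
        ring_nf
    _ ≤ K₂ * (M : ℝ) ^ ((γ + 1) / p + 1 - α) := by
        gcongr

/-! ### One-dimensional graphs of polynomial growth -/

lemma sub_le_mul_pathMetric {X : Type*} {b : X → X → ℝ} {D f : X → ℝ} {C : ℝ} (hC : 0 < C)
    (hf : ∀ x y, 0 < b x y → f y - f x ≤ C * √(min (1 / D x) (1 / D y))) {x y : X}
    (hxy : ∃ (N : ℕ) (p : ℕ → X), p 0 = x ∧ p N = y ∧ ∀ j < N, 0 < b (p j) (p (j + 1))) :
    f y - f x ≤ C * pathMetric b D x y := by
  rw [← div_le_iff₀' hC]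
  obtain ⟨N, p, h0, hN, hp⟩ := hxy
  refine le_csInf ⟨_, N, p, h0, hN, hp, rfl⟩ ?_
  rintro L ⟨N, p, rfl, rfl, hp, rfl⟩
  rw [div_le_iff₀' hC, ← sum_range_sub (fun j => f (p j)), mul_sum]
  exact sum_le_sum fun j hj => hf _ _ (hp j (mem_range.1 hj))

namespace OneDim

variable {s : ℕ → ℕ} {γ c C : ℝ}

lemma m_nonneg (k : ℕ) : 0 ≤ m s k := Nat.cast_nonneg _

lemma wt_nonneg (k l : ℕ) : 0 ≤ wt s k l := by
  unfold wt
  split_ifs <;> positivity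

lemma wt_succ (k : ℕ) : wt s k (k + 1) = s k * s (k + 1) := if_pos (Or.inl rfl)

lemma wt_le (k l : ℕ) : wt s k l ≤ s k * s l := by
  unfold wt
  split_ifs
  · rfl
  · positivity

lemma adj_of_wt_pos {k l : ℕ} (h : 0 < wt s k l) : k + 1 = l ∨ l + 1 = k := by
  by_contra hne
  simp [wt, hne] at h

lemma wt_pos (hpos : ∀ k, 0 < s k) {k l : ℕ} (h : k + 1 = l ∨ l + 1 = k) : 0 < wt s k l := by
  rw [wt, if_pos h]
  exact mul_pos (Nat.cast_pos.2 (hpos k)) (Nat.cast_pos.2 (hpos l))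

lemma exists_path (hpos : ∀ k, 0 < s k) (k l : ℕ) :
    ∃ (N : ℕ) (p : ℕ → ℕ), p 0 = k ∧ p N = l ∧ ∀ j < N, 0 < wt s (p j) (p (j + 1)) := by
  rcases le_total k l with hkl | hlk
  · exact ⟨l - k, fun j => k + j, rfl, Nat.add_sub_cancel' hkl,
      fun j _ => wt_pos hpos (Or.inl (by grind))⟩
  · exact ⟨k - l, fun j => k - j, rfl, Nat.sub_sub_self hlk,
      fun j _ => wt_pos hpos (Or.inr (by grind))⟩

/-- At `k = 0` the truncated `k - 1` is `k` itself, where the weight vanishes. -/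
lemma Deg_eq (k : ℕ) : Deg s k = 1 / m s k * (wt s k (k - 1) + wt s k (k + 1)) := by
  rw [Deg, tsum_eq_sum (s := {k - 1, k + 1}), sum_pair (by omega)]
  intro l hl
  simp only [mem_insert, mem_singleton, not_or] at hl
  exact if_neg (by omega)

lemma Deg_pos (hpos : ∀ k, 0 < s k) (k : ℕ) : 0 < Deg s k := by
  rw [Deg_eq]
  exact mul_pos (one_div_pos.2 (Nat.cast_pos.2 (hpos k)))
    (add_pos_of_nonneg_of_pos (wt_nonneg _ _) (wt_pos hpos (Or.inl rfl)))

lemma Deg_le (k : ℕ) : Deg s k ≤ s (k - 1) + s (k + 1) := by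
  rw [Deg_eq, one_div]
  refine inv_mul_le_of_le_mul₀ (m_nonneg k) (by positivity) ?_
  rw [mul_add]
  exact add_le_add (wt_le _ _) (wt_le _ _)

lemma tsum_m_mul_rpow_nonneg (φ : ℕ → ℝ) (q : ℝ) : 0 ≤ ∑' l, m s l * |φ l| ^ q :=
  tsum_nonneg fun l => mul_nonneg (m_nonneg l) (Real.rpow_nonneg (abs_nonneg _) q)

lemma vol_nonneg (A : Set ℕ) : 0 ≤ vol s A :=
  tsum_nonneg fun _ => Set.indicator_nonneg (fun _ _ => m_nonneg _) _

lemma vol_le_sum_range {A : Set ℕ} {M : ℕ} (hA : A ⊆ Set.Iio M) :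
    vol s A ≤ ∑ l ∈ range M, m s l := by
  rw [vol, tsum_eq_sum (s := range M)]
  · exact sum_le_sum fun l _ => Set.indicator_le_self' (fun _ _ => m_nonneg _) _
  · exact fun l hl => Set.indicator_of_notMem (fun h => hl (mem_range.2 (hA h))) _

lemma vol_le_mul_rpow (hγ : 0 ≤ γ) (hs : ∀ k, (s k : ℝ) ≤ C * ((k : ℝ) + 1) ^ γ) {A : Set ℕ}
    {M : ℕ} (hM : 0 < M) (hA : A ⊆ Set.Iio M) : vol s A ≤ C * (M : ℝ) ^ (γ + 1) := by
  have hM0 : (0 : ℝ) < M := Nat.cast_pos.2 hM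
  have hC : 0 ≤ C := by simpa using (Nat.cast_nonneg (s 0)).trans (hs 0)
  have hm : ∀ l ∈ range M, m s l ≤ C * (M : ℝ) ^ γ := fun l hl => (hs l).trans (by
    gcongr
    exact_mod_cast mem_range.1 hl)
  calc vol s A ≤ ∑ l ∈ range M, m s l := vol_le_sum_range hA
    _ ≤ #(range M) • (C * (M : ℝ) ^ γ) := sum_le_card_nsmul _ _ _ hm
    _ = C * (M : ℝ) ^ (γ + 1) := by
      rw [card_range, nsmul_eq_mul, Real.rpow_add hM0, Real.rpow_one]
      ring

lemma energy_nonneg (φ : ℕ → ℝ) : 0 ≤ ∑' p : ℕ × ℕ, wt s p.1 p.2 * (φ p.1 - φ p.2) ^ 2 :=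
  tsum_nonneg fun _ => mul_nonneg (wt_nonneg _ _) (sq_nonneg _)

lemma summable_energy {φ : ℕ → ℝ} {M : ℕ} (hφ : ∀ l, M ≤ l → φ l = 0) :
    Summable fun p : ℕ × ℕ => wt s p.1 p.2 * (φ p.1 - φ p.2) ^ 2 := by
  refine summable_of_ne_finset_zero (s := range (M + 1) ×ˢ range (M + 1)) ?_
  rintro ⟨i, j⟩ hij
  simp only [mem_product, mem_range, not_and_or, not_lt] at hij
  by_cases h : i + 1 = j ∨ j + 1 = i
  · simp [hφ i (by omega), hφ j (by omega)]
  · simp [wt, h]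

lemma sum_range_le_energy {φ : ℕ → ℝ} {M : ℕ} (hφ : ∀ l, M ≤ l → φ l = 0) :
    ∑ j ∈ range M, (s j * s (j + 1) : ℝ) * (φ (j + 1) - φ j) ^ 2 ≤
      ∑' p : ℕ × ℕ, wt s p.1 p.2 * (φ p.1 - φ p.2) ^ 2 := by
  have hinj : Function.Injective fun j : ℕ => (j, j + 1) := fun _ _ h => (Prod.ext_iff.1 h).1
  calc ∑ j ∈ range M, (s j * s (j + 1) : ℝ) * (φ (j + 1) - φ j) ^ 2
      = ∑ p ∈ (range M).map ⟨_, hinj⟩, wt s p.1 p.2 * (φ p.1 - φ p.2) ^ 2 := by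
        rw [sum_map]
        refine sum_congr rfl fun j _ => ?_
        rw [Function.Embedding.coeFn_mk, wt_succ, sub_sq_comm]
    _ ≤ ∑' p : ℕ × ℕ, wt s p.1 p.2 * (φ p.1 - φ p.2) ^ 2 :=
        (summable_energy hφ).sum_le_tsum _ fun _ _ => mul_nonneg (wt_nonneg _ _) (sq_nonneg _)

lemma rpow_neg_le_mul_one_div_Deg (hγ : 0 ≤ γ) (hpos : ∀ k, 0 < s k)
    (hs : ∀ k, (s k : ℝ) ≤ C * ((k : ℝ) + 1) ^ γ) {i k : ℕ} (hik : i ≤ k + 1) :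
    ((k : ℝ) + 1) ^ (-γ) ≤ 2 * 3 ^ γ * C * (1 / Deg s i) := by
  have hC : 0 ≤ C := by simpa using (Nat.cast_nonneg (s 0)).trans (hs 0)
  have hk0 : (0 : ℝ) < (k : ℝ) + 1 := by positivity
  have hs_le {j : ℕ} (hj : j ≤ k + 2) : (s j : ℝ) ≤ 3 ^ γ * C * ((k : ℝ) + 1) ^ γ := by
    have hj' : (j : ℝ) ≤ k + 2 := by exact_mod_cast hj
    have hjk : (j : ℝ) + 1 ≤ 3 * ((k : ℝ) + 1) := by linarith [(Nat.cast_nonneg k : (0 : ℝ) ≤ k)]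
    refine (hs j).trans ?_
    rw [mul_comm _ C, mul_assoc, ← Real.mul_rpow (by norm_num) hk0.le]
    gcongr
  rw [mul_one_div, le_div_iff₀ (Deg_pos hpos i), Real.rpow_neg hk0.le,
    inv_mul_le_iff₀ (by positivity)]
  linarith [Deg_le (s := s) i, hs_le (show i - 1 ≤ k + 2 by omega),
    hs_le (show i + 1 ≤ k + 2 by omega)]

lemma rpow_sub_rpow_le_mul_rho (hγ0 : 0 ≤ γ) (hγ2 : γ ≤ 2) (hpos : ∀ k, 0 < s k)
    (hs : ∀ k, (s k : ℝ) ≤ C * ((k : ℝ) + 1) ^ γ) (k l : ℕ) :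
    ((l : ℝ) + 1) ^ (1 - γ / 2) - ((k : ℝ) + 1) ^ (1 - γ / 2) ≤
      √(2 * 3 ^ γ * C) * rho s k l := by
  have hC : 0 < C := by simpa using (Nat.cast_pos.2 (hpos 0)).trans_le (hs 0)
  refine sub_le_mul_pathMetric (f := fun k : ℕ => ((k : ℝ) + 1) ^ (1 - γ / 2)) (by positivity)
    (fun i j hij => ?_) (exists_path hpos k l)
  rcases adj_of_wt_pos hij with rfl | rfl
  · have hi0 : (0 : ℝ) < (i : ℝ) + 1 := by positivity
    rw [← Real.sqrt_mul (by positivity), mul_min_of_nonneg _ _ (by positivity), Nat.cast_succ]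
    refine (add_one_rpow_sub_rpow_le hi0 (by linarith) (by linarith)).trans
      (Real.le_sqrt_of_sq_le ?_)
    rw [← Real.rpow_mul_natCast hi0.le, show (1 - γ / 2 - 1) * (2 : ℕ) = -γ by push_cast; ring]
    exact le_min (rpow_neg_le_mul_one_div_Deg hγ0 hpos hs i.le_succ)
      (rpow_neg_le_mul_one_div_Deg hγ0 hpos hs le_rfl)
  · have hmono : ((j : ℝ) + 1) ^ (1 - γ / 2) ≤ (((j + 1 : ℕ) : ℝ) + 1) ^ (1 - γ / 2) := by
      gcongr
      · linarith
      · exact j.le_succ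
    exact (sub_nonpos.2 hmono).trans (by positivity)

lemma exists_ball_subset_Iio (hγ0 : 0 ≤ γ) (hγ2 : γ < 2) (hpos : ∀ k, 0 < s k)
    (hs : ∀ k, (s k : ℝ) ≤ C * ((k : ℝ) + 1) ^ γ) :
    ∃ K : ℝ, 0 < K ∧ ∀ k : ℕ, ∀ r : ℝ, max 1 (rho s 0 k) ≤ r →
      ∃ M : ℕ, 0 < M ∧ (M : ℝ) ^ (2 - γ) ≤ K * r ^ 2 ∧ ball s k r ⊆ Set.Iio M := by
  have hp : 0 < 1 - γ / 2 := by linarith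
  set B : ℝ := √(2 * 3 ^ γ * C)
  have hB : 0 ≤ B := Real.sqrt_nonneg _
  refine ⟨(1 + 2 * B) ^ 2, by positivity, fun k r hr => ?_⟩
  have hr1 : 1 ≤ r := (le_max_left _ _).trans hr
  have hR : 1 ≤ (1 + 2 * B) * r := by nlinarith
  have hR0 : 0 ≤ (1 + 2 * B) * r := by linarith
  have hball {l : ℕ} (hl : l ∈ ball s k r) : ((l : ℝ) + 1) ^ (1 - γ / 2) ≤ (1 + 2 * B) * r := by
    have h0k := (rpow_sub_rpow_le_mul_rho hγ0 hγ2.le hpos hs 0 k).trans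
      (mul_le_mul_of_nonneg_left ((le_max_right _ _).trans hr) hB)
    have hkl := (rpow_sub_rpow_le_mul_rho hγ0 hγ2.le hpos hs k l).trans
      (mul_le_mul_of_nonneg_left hl hB)
    rw [Nat.cast_zero, zero_add, Real.one_rpow] at h0k
    linarith
  refine ⟨⌊((1 + 2 * B) * r) ^ (1 - γ / 2)⁻¹⌋₊, ?_, ?_, fun l hl => ?_⟩
  · exact Nat.floor_pos.2 (Real.one_le_rpow hR (by positivity))
  · have hfloor := Nat.floor_le (Real.rpow_nonneg hR0 (1 - γ / 2)⁻¹)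
    rw [Real.le_rpow_inv_iff_of_pos (by positivity) hR0 hp] at hfloor
    rw [← mul_pow, show 2 - γ = (1 - γ / 2) * (2 : ℕ) by push_cast; ring,
      Real.rpow_mul_natCast (by positivity)]
    gcongr
  · refine Nat.le_floor ?_
    rw [Nat.cast_succ, Real.le_rpow_inv_iff_of_pos (by positivity) hR0 hp]
    exact hball hl

lemma growth_const_pos (hc : 0 < c) (hcs : ∀ k : ℕ, c * ((k : ℝ) + 1) ^ γ ≤ s k)
    (hs : ∀ k, (s k : ℝ) ≤ C * ((k : ℝ) + 1) ^ γ) : 0 < C := by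
  simpa using (mul_pos hc (by positivity)).trans_le ((hcs 0).trans (hs 0))

lemma sum_rpow_le_energy (hγ : 0 ≤ γ) (hc : 0 < c) (hcs : ∀ k : ℕ, c * ((k : ℝ) + 1) ^ γ ≤ s k)
    {φ : ℕ → ℝ} {M : ℕ} (hφ : ∀ l, M ≤ l → φ l = 0) :
    c ^ 2 * ∑ j ∈ range M, ((j : ℝ) + 1) ^ (2 * γ) * (φ (j + 1) - φ j) ^ 2 ≤
      ∑' p : ℕ × ℕ, wt s p.1 p.2 * (φ p.1 - φ p.2) ^ 2 := by
  refine le_trans ?_ (sum_range_le_energy hφ)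
  rw [mul_sum]
  refine sum_le_sum fun j _ => ?_
  have hsucc : c * ((j : ℝ) + 1) ^ γ ≤ s (j + 1) := le_trans (by gcongr; simp) (hcs (j + 1))
  calc c ^ 2 * (((j : ℝ) + 1) ^ (2 * γ) * (φ (j + 1) - φ j) ^ 2)
      = (c * ((j : ℝ) + 1) ^ γ) * (c * ((j : ℝ) + 1) ^ γ) * (φ (j + 1) - φ j) ^ 2 := by
        rw [two_mul, Real.rpow_add (by positivity)]
        ring
    _ ≤ s j * s (j + 1) * (φ (j + 1) - φ j) ^ 2 := by
        gcongr
        exact hcs j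

lemma tsum_m_mul_abs_rpow_le {n : ℝ} (hn : 2 < n) (hs : ∀ k, (s k : ℝ) ≤ C * ((k : ℝ) + 1) ^ γ)
    {φ : ℕ → ℝ} {M : ℕ} (hφ : ∀ l, M ≤ l → φ l = 0) :
    ∑' l, m s l * |φ l| ^ (2 * n / (n - 2)) ≤
      C * ∑ l ∈ range M, ((l : ℝ) + 1) ^ γ * (φ l ^ 2) ^ (n / (n - 2)) := by
  have : 0 < n - 2 := by linarith
  have hq : 2 * n / (n - 2) ≠ 0 := by positivity
  rw [tsum_eq_sum (s := range M) fun l hl => by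
    rw [hφ l (by simpa using hl), abs_zero, Real.zero_rpow hq, mul_zero], mul_sum]
  refine sum_le_sum fun l _ => ?_
  have habs : |φ l| ^ (2 * n / (n - 2)) = (φ l ^ 2) ^ (n / (n - 2)) := by
    rw [← sq_abs, ← Real.rpow_natCast_mul (abs_nonneg _), Nat.cast_ofNat, mul_div_assoc]
  rw [habs, ← mul_assoc]
  exact mul_le_mul_of_nonneg_right (hs l) (by positivity)

lemma exists_sobolev_of_vanishing (hγ : 0 ≤ γ) {n : ℝ} (hn : 2 < n)
    (hnd : (γ + 1) * (2 / n) ≤ 2 - γ) (hc : 0 < c) (hcs : ∀ k : ℕ, c * ((k : ℝ) + 1) ^ γ ≤ s k)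
    (hs : ∀ k, (s k : ℝ) ≤ C * ((k : ℝ) + 1) ^ γ) :
    ∃ K : ℝ, 0 < K ∧ ∀ (M : ℕ) (φ : ℕ → ℝ), (∀ l, M ≤ l → φ l = 0) →
      (∑' l : ℕ, m s l * |φ l| ^ (2 * n / (n - 2))) ^ ((n - 2) / n) ≤
        K * (M : ℝ) ^ (2 - γ - (γ + 1) * (2 / n)) *
          ∑' p : ℕ × ℕ, wt s p.1 p.2 * (φ p.1 - φ p.2) ^ 2 := by
  have hn2 : 0 < n - 2 := by linarith
  have hp : 1 ≤ n / (n - 2) := by rw [one_le_div hn2]; linarith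
  have hinv : 1 / (n / (n - 2)) = (n - 2) / n := one_div_div _ _
  have hC : 0 < C := growth_const_pos hc hcs hs
  have hθ : (γ + 1) / (n / (n - 2)) + 1 - 2 * γ = 2 - γ - (γ + 1) * (2 / n) := by
    field_simp
    ring
  obtain ⟨K, hK, hardy⟩ := exists_hardy_rpow (γ := γ) (α := 2 * γ) (by linarith) hp (by linarith)
  rw [hθ, hinv] at hardy
  refine ⟨C ^ ((n - 2) / n) * K / c ^ 2, by positivity, fun M φ hφ => ?_⟩
  set S := ∑ l ∈ range M, ((l : ℝ) + 1) ^ γ * (φ l ^ 2) ^ (n / (n - 2))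
  set E := ∑ j ∈ range M, ((j : ℝ) + 1) ^ (2 * γ) * (φ (j + 1) - φ j) ^ 2
  calc (∑' l : ℕ, m s l * |φ l| ^ (2 * n / (n - 2))) ^ ((n - 2) / n)
      ≤ (C * S) ^ ((n - 2) / n) :=
        Real.rpow_le_rpow (tsum_m_mul_rpow_nonneg φ _) (tsum_m_mul_abs_rpow_le hn hs hφ)
          (by positivity)
    _ = C ^ ((n - 2) / n) * S ^ ((n - 2) / n) := Real.mul_rpow hC.le (by positivity)
    _ ≤ C ^ ((n - 2) / n) * (K * (M : ℝ) ^ (2 - γ - (γ + 1) * (2 / n)) * E) := by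
        gcongr
        exact hardy M φ (hφ M le_rfl)
    _ = C ^ ((n - 2) / n) * K / c ^ 2 * (M : ℝ) ^ (2 - γ - (γ + 1) * (2 / n)) * (c ^ 2 * E) := by
        field_simp
    _ ≤ _ := by
        gcongr
        exact sum_rpow_le_energy hγ hc hcs hφ

lemma exists_sobolev_of_subset_Iio (hγ : 0 ≤ γ) {n : ℝ} (hn : 2 < n)
    (hnd : (γ + 1) * (2 / n) ≤ 2 - γ) (hc : 0 < c) (hcs : ∀ k : ℕ, c * ((k : ℝ) + 1) ^ γ ≤ s k)
    (hs : ∀ k, (s k : ℝ) ≤ C * ((k : ℝ) + 1) ^ γ) :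
    ∃ K : ℝ, 0 < K ∧ ∀ M : ℕ, 0 < M → ∀ A ⊆ Set.Iio M, ∀ φ : ℕ → ℝ, Function.support φ ⊆ A →
      vol s A ^ (2 / n) * (∑' l : ℕ, m s l * |φ l| ^ (2 * n / (n - 2))) ^ ((n - 2) / n) ≤
        K * (M : ℝ) ^ (2 - γ) * ∑' p : ℕ × ℕ, wt s p.1 p.2 * (φ p.1 - φ p.2) ^ 2 := by
  have hC : 0 < C := growth_const_pos hc hcs hs
  obtain ⟨K, hK, hsob⟩ := exists_sobolev_of_vanishing hγ hn hnd hc hcs hs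
  refine ⟨C ^ (2 / n) * K, by positivity, fun M hM A hA φ hφ => ?_⟩
  have hM0 : (0 : ℝ) < M := Nat.cast_pos.2 hM
  have hφM : ∀ l, M ≤ l → φ l = 0 := fun l hl =>
    Function.notMem_support.1 fun h => (hA (hφ h)).not_ge hl
  have hV : 0 ≤ vol s A := vol_nonneg A
  set E := ∑' p : ℕ × ℕ, wt s p.1 p.2 * (φ p.1 - φ p.2) ^ 2
  calc vol s A ^ (2 / n) * (∑' l : ℕ, m s l * |φ l| ^ (2 * n / (n - 2))) ^ ((n - 2) / n)
      ≤ (C * (M : ℝ) ^ (γ + 1)) ^ (2 / n) * (K * (M : ℝ) ^ (2 - γ - (γ + 1) * (2 / n)) * E) := by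
        gcongr
        · exact Real.rpow_nonneg (tsum_m_mul_rpow_nonneg φ _) _
        · exact vol_le_mul_rpow hγ hs hM hA
        · exact hsob M φ hφM
    _ = C ^ (2 / n) * K *
          ((M : ℝ) ^ ((γ + 1) * (2 / n)) * (M : ℝ) ^ (2 - γ - (γ + 1) * (2 / n))) * E := by
        rw [Real.mul_rpow hC.le (by positivity), ← Real.rpow_mul hM0.le]
        ring
    _ = C ^ (2 / n) * K * (M : ℝ) ^ (2 - γ) * E := by
        rw [← Real.rpow_add hM0, add_sub_cancel]

end OneDim

lemma gammaSphere_le (γ : ℝ) (k : ℕ) : (gammaSphere γ k : ℝ) ≤ ((k : ℝ) + 1) ^ γ :=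
  Nat.floor_le (by positivity)

lemma half_rpow_le_gammaSphere {γ : ℝ} (hγ : 0 ≤ γ) (k : ℕ) :
    1 / 2 * ((k : ℝ) + 1) ^ γ ≤ gammaSphere γ k := by
  have hone : (1 : ℝ) ≤ gammaSphere γ k := by
    exact_mod_cast Nat.floor_pos.2 (Real.one_le_rpow (by simp) hγ)
  have hfloor : ((k : ℝ) + 1) ^ γ < (gammaSphere γ k : ℝ) + 1 := Nat.lt_floor_add_one _
  linarith

theorem gammaAntiTree_sobolev_general {s : ℕ → ℕ} {γ c C : ℝ} (hγ0 : 0 ≤ γ) (hγ2 : γ < 2)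
    (hc : 0 < c) (hcs : ∀ k : ℕ, c * ((k : ℝ) + 1) ^ γ ≤ s k)
    (hs : ∀ k, (s k : ℝ) ≤ C * ((k : ℝ) + 1) ^ γ)
    {n : ℝ} (hn : 2 < n) (hnd : 2 * (γ + 1) / (2 - γ) ≤ n) :
    ∃ C_S : ℝ, 0 < C_S ∧ ∀ k : ℕ, ∀ r : ℝ, max 1 (OneDim.rho s 0 k) ≤ r →
      ∀ φ : ℕ → ℝ, Function.support φ ⊆ OneDim.ball s k r →
        OneDim.vol s (OneDim.ball s k r) ^ (2 / n) / (C_S * r ^ 2) *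
            (∑' l : ℕ, OneDim.m s l * |φ l| ^ (2 * n / (n - 2))) ^ ((n - 2) / n) ≤
          ∑' p : ℕ × ℕ, OneDim.wt s p.1 p.2 * (φ p.1 - φ p.2) ^ 2 := by
  have hpos (k : ℕ) : 0 < s k := Nat.cast_pos.1 (lt_of_lt_of_le (by positivity) (hcs k))
  have hθ : (γ + 1) * (2 / n) ≤ 2 - γ := by
    rw [← mul_div_assoc, div_le_comm₀ (by linarith) (by linarith), mul_comm]
    exact hnd
  obtain ⟨K, hK, hsob⟩ := OneDim.exists_sobolev_of_subset_Iio hγ0 hn hθ hc hcs hs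
  obtain ⟨B, hB, hball⟩ := OneDim.exists_ball_subset_Iio hγ0 hγ2 hpos hs
  refine ⟨K * B, by positivity, fun k r hr φ hφ => ?_⟩
  obtain ⟨M, hM, hMr, hBM⟩ := hball k r hr
  have hr0 : 0 < r := zero_lt_one.trans_le ((le_max_left _ _).trans hr)
  have hE := OneDim.energy_nonneg (s := s) φ
  rw [div_mul_eq_mul_div, div_le_iff₀ (by positivity), mul_comm (tsum _), mul_assoc K]
  exact (hsob M hM _ hBM φ hφ).trans (by gcongr)

/-- **Sobolev inequality for anti-trees.**
For `γ ∈ (0,2)`, `d := 2(γ+1)/(2-γ)` and a real `n ≥ 2d` (note `2d > 2`), consider the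
one-dimensional graph `b̃` over `(ℕ₀, m̃)` associated with the `γ`-anti-tree, with
intrinsic degree path metric `ρ̃` and closed balls `B̃_k(r)`.  There is `C_S > 0` such
that for every `k ∈ ℕ₀`, every `r ≥ max(1, ρ̃(0,k))` and every finitely supported
`φ : ℕ₀ → ℝ` with support contained in `B̃_k(r)`:
`(m̃(B̃_k(r))^{2/n}/(C_S r²)) (∑_l m̃(l)|φ(l)|^{2n/(n-2)})^{(n-2)/n}
  ≤ ∑_{k',l} b̃(k',l)(φ(k')-φ(l))² + (1/r²) ∑_l m̃(l) φ(l)²`. -/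
theorem gammaAntiTree_sobolev (γ : ℝ) (hγ0 : 0 < γ) (hγ2 : γ < 2)
    (n : ℝ) (hnd : 2 * (2 * (γ + 1) / (2 - γ)) ≤ n) :
    ∃ C_S : ℝ, 0 < C_S ∧ ∀ k : ℕ, ∀ r : ℝ, max 1 (OneDim.rho (gammaSphere γ) 0 k) ≤ r →
      ∀ φ : ℕ → ℝ, (Function.support φ).Finite →
        Function.support φ ⊆ OneDim.ball (gammaSphere γ) k r →
        OneDim.vol (gammaSphere γ) (OneDim.ball (gammaSphere γ) k r) ^ (2 / n) /
              (C_S * r ^ 2) *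
            (∑' l : ℕ, OneDim.m (gammaSphere γ) l * |φ l| ^ (2 * n / (n - 2))) ^ ((n - 2) / n) ≤
          (∑' p : ℕ × ℕ, OneDim.wt (gammaSphere γ) p.1 p.2 * (φ p.1 - φ p.2) ^ 2) +
            (1 / r ^ 2) * ∑' l : ℕ, OneDim.m (gammaSphere γ) l * φ l ^ 2 := by
  have hd : 1 < 2 * (γ + 1) / (2 - γ) := by
    rw [one_lt_div (by linarith)]
    linarith
  obtain ⟨C, hC, hsob⟩ := gammaAntiTree_sobolev_general hγ0.le hγ2 one_half_pos
    (half_rpow_le_gammaSphere hγ0.le) (fun k => (gammaSphere_le γ k).trans (one_mul _).ge)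
    (show 2 < n by linarith) (by linarith)
  refine ⟨C, hC, fun k r hr φ _ hφ => (hsob k r hr φ hφ).trans (le_add_of_nonneg_right ?_)⟩
  exact mul_nonneg (by positivity)
    (tsum_nonneg fun l => mul_nonneg (OneDim.m_nonneg l) (sq_nonneg _))
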